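/- Let ℍ be the hyperbolic plane on which SL(2,ℝ) acts by Möbius isometries, and let ε > 0 be a Margulis constant for ℍ, i.e. assume: for every discrete subgroup Δ of SL(2,ℝ) and every x ∈ ℍ, the subgroup of Δ generated by {γ ∈ Δ : dist(x, γ·x) ≤ ε} is virtually abelian. Then there exists K ∈ ℕ with the following property. Let g, h ∈ SL(2,ℝ) be non-elliptic (|trace| ≥ 2 and not equal to ±identity) with translation length τ(g) := ⨅_{x∈ℍ} dist(x, g·x) ≤ ε/10, and suppose the subgroup of SL(2,ℝ) generated by g and h is discrete and not virtually abelian. Then there exists an integer i with 1 ≤ i ≤ K such that the images of g and h^i g h^{−i} in PSL(2,ℝ) generate a free group of rank two (the homomorphism from the free group on two generators to PSL(2,ℝ) determined by g and h^i g h^{−i} is injective). -/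

import Mathlib

open UpperHalfPlane

/-- `SL(2,ℝ)`. -/
abbrev SL2R := Matrix.SpecialLinearGroup (Fin 2) ℝ

/-- A group is virtually abelian if it has an abelian finite-index subgroup. -/
def VirtuallyAbelian (G : Type*) [Group G] : Prop :=
  ∃ H : Subgroup G, H.FiniteIndex ∧ ∀ a ∈ H, ∀ b ∈ H, a * b = b * a

/-- A subgroup of `SL(2,ℝ)` is discrete if the identity is isolated in it. -/
def IsDiscreteSubgroup (Γ : Subgroup SL2R) : Prop :=
  ∃ U : Set (Matrix (Fin 2) (Fin 2) ℝ), IsOpen U ∧ (1 : Matrix (Fin 2) (Fin 2) ℝ) ∈ U ∧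
    ∀ γ ∈ Γ, (γ : Matrix (Fin 2) (Fin 2) ℝ) ∈ U → γ = 1

/-- `ε` is a Margulis constant for `ℍ`: for every discrete subgroup `Δ ≤ SL(2,ℝ)` and
every `x ∈ ℍ`, the subgroup generated by the elements of `Δ` moving `x` at most `ε` is
virtually abelian. -/
def IsMargulisConstant (ε : ℝ) : Prop :=
  ∀ Δ : Subgroup SL2R, IsDiscreteSubgroup Δ → ∀ x : UpperHalfPlane,
    VirtuallyAbelian ↥(Subgroup.closure {γ : SL2R | γ ∈ Δ ∧ dist x (γ • x) ≤ ε})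

/-- An element of `SL(2,ℝ)` is non-elliptic iff `|trace| ≥ 2` and it is not `±1`. -/
def NonElliptic (g : SL2R) : Prop :=
  2 ≤ |Matrix.trace (g : Matrix (Fin 2) (Fin 2) ℝ)| ∧
    (g : Matrix (Fin 2) (Fin 2) ℝ) ≠ 1 ∧ (g : Matrix (Fin 2) (Fin 2) ℝ) ≠ -1

/-- The translation length of `g ∈ SL(2,ℝ)` acting on `ℍ`. -/
noncomputable def translationLength (g : SL2R) : ℝ :=
  ⨅ x : UpperHalfPlane, dist x (g • x)

/-! ### Explicit elements of `SL(2,ℝ)` -/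

/-- The element of `SL(2,ℝ)` with given entries. -/
def mk2 (a b c d : ℝ) (h : a * d - b * c = 1) : SL2R :=
  ⟨!![a, b; c, d], by rw [Matrix.det_fin_two_of]; exact h⟩

lemma exists_mk2 (g : SL2R) : ∃ a b c d h, g = mk2 a b c d h := by
  refine ⟨g 0 0, g 0 1, g 1 0, g 1 1, ?_, ?_⟩
  · have := g.2
    rw [Matrix.det_fin_two] at this
    exact this
  · ext i j
    fin_cases i <;> fin_cases j <;> simp [mk2]

lemma mk2_inj {a b c d h a' b' c' d' h'} :
    mk2 a b c d h = mk2 a' b' c' d' h' ↔ a = a' ∧ b = b' ∧ c = c' ∧ d = d' := by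
  constructor
  · intro e
    have e' := congrArg (fun x : SL2R => (x : Matrix (Fin 2) (Fin 2) ℝ)) e
    simp only [mk2] at e'
    refine ⟨?_, ?_, ?_, ?_⟩
    · simpa using congrFun (congrFun e' 0) 0
    · simpa using congrFun (congrFun e' 0) 1
    · simpa using congrFun (congrFun e' 1) 0
    · simpa using congrFun (congrFun e' 1) 1
  · rintro ⟨rfl, rfl, rfl, rfl⟩
    rfl

lemma mk2_mul (a b c d h a' b' c' d' h') :
    mk2 a b c d h * mk2 a' b' c' d' h' =
      mk2 (a * a' + b * c') (a * b' + b * d') (c * a' + d * c') (c * b' + d * d')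
        (by linear_combination (a' * d' - b' * c') * h + h') := by
  apply Subtype.ext
  rw [Matrix.SpecialLinearGroup.coe_mul]
  exact Matrix.mul_fin_two _ _ _ _ _ _ _ _

lemma mk2_inv (a b c d h) :
    (mk2 a b c d h)⁻¹ = mk2 d (-b) (-c) a (by linear_combination h) := by
  rw [inv_eq_iff_mul_eq_one, mk2_mul]
  apply Subtype.ext
  rw [Matrix.SpecialLinearGroup.coe_one, Matrix.one_fin_two]
  simp only [mk2]
  congr 1
  ext i j
  fin_cases i <;> fin_cases j <;> simp <;> linarith

lemma one_mk2 : (1 : SL2R) = mk2 1 0 0 1 (by norm_num) := by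
  apply Subtype.ext
  rw [Matrix.SpecialLinearGroup.coe_one, Matrix.one_fin_two]
  rfl

/-- The trace. -/
def tr2 (g : SL2R) : ℝ := Matrix.trace (g : Matrix (Fin 2) (Fin 2) ℝ)

lemma tr2_mk2 (a b c d h) : tr2 (mk2 a b c d h) = a + d := by
  simp [tr2, mk2, Matrix.trace_fin_two]

/-- `J g h = tr [g, h] - 2 = - det (g h - h g)`. -/
def JJ (g h : SL2R) : ℝ := tr2 (g * h * g⁻¹ * h⁻¹) - 2

lemma tr2_conj (g h : SL2R) : tr2 (h * g * h⁻¹) = tr2 g := by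
  obtain ⟨a, b, c, d, hg, rfl⟩ := exists_mk2 g
  obtain ⟨p, q, r, s, hh, rfl⟩ := exists_mk2 h
  simp only [mk2_inv, mk2_mul, tr2_mk2]
  linear_combination (a + d) * hh

lemma tr2_inv (g : SL2R) : tr2 g⁻¹ = tr2 g := by
  obtain ⟨a, b, c, d, hg, rfl⟩ := exists_mk2 g
  simp only [mk2_inv, tr2_mk2]
  ring

lemma tr2_mul_inv (g k : SL2R) : tr2 (g * k) = tr2 g * tr2 k - tr2 (g * k⁻¹) := by
  obtain ⟨a, b, c, d, hg, rfl⟩ := exists_mk2 g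
  obtain ⟨p, q, r, s, hh, rfl⟩ := exists_mk2 k
  simp only [mk2_inv, mk2_mul, tr2_mk2]
  ring

lemma tr2_g_kinv (g h : SL2R) : tr2 (g * (h * g * h⁻¹)⁻¹) = 2 + JJ g h := by
  simp [JJ, mul_assoc]

lemma tr2_g_k (g h : SL2R) : tr2 (g * (h * g * h⁻¹)) = tr2 g ^ 2 - 2 - JJ g h := by
  rw [tr2_mul_inv, tr2_g_kinv, tr2_conj]
  ring

/-! ### Powers -/

/-- Chebyshev-type sequence. -/
def UU (t : ℝ) : ℕ → ℝ
  | 0 => 0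
  | 1 => 1
  | (n + 2) => t * UU t (n + 1) - UU t n

lemma UU_grow (t : ℝ) (ht : 2 ≤ |t|) (n : ℕ) : |UU t n| + 1 ≤ |UU t (n + 1)| := by
  induction n with
  | zero => simp [UU]
  | succ n ih =>
    have h1 : |t * UU t (n + 1)| ≤ |UU t (n + 2)| + |UU t n| := by
      have : t * UU t (n + 1) = UU t (n + 2) + UU t n := by simp [UU]
      rw [this]
      exact abs_add_le _ _
    rw [abs_mul] at h1
    have h2 : 2 * |UU t (n + 1)| ≤ |t| * |UU t (n + 1)| := by gcongr
    show |UU t (n + 1)| + 1 ≤ |UU t (n + 2)|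
    linarith

lemma UU_ge (t : ℝ) (ht : 2 ≤ |t|) (n : ℕ) : (n : ℝ) ≤ |UU t n| := by
  induction n with
  | zero => simp
  | succ n ih =>
    have := UU_grow t ht n
    push_cast
    linarith

lemma pow_mk2 (a b c d h) (n : ℕ) : ∃ V h', (mk2 a b c d h) ^ n =
    mk2 (UU (a + d) n * a - V) (UU (a + d) n * b) (UU (a + d) n * c)
      (UU (a + d) n * d - V) h' ∧ UU (a + d) (n + 1) = UU (a + d) n * (a + d) - V := by
  induction n with
  | zero =>
    refine ⟨-1, by simp [UU], ?_, ?_⟩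
    · rw [pow_zero, one_mk2, mk2_inj]
      simp [UU]
    · simp [UU]
  | succ n ih =>
    obtain ⟨V, h', e, hV⟩ := ih
    have key : UU (a + d) (n + 1) = UU (a + d) n * (a + d) - V := hV
    have hp : (mk2 a b c d h) ^ (n + 1) = mk2 (UU (a + d) n * a - V) (UU (a + d) n * b)
      (UU (a + d) n * c) (UU (a + d) n * d - V) h' * mk2 a b c d h := by
      rw [pow_succ, e]
    rw [mk2_mul] at hp
    set U := UU (a + d) n
    have e1 : (U * a - V) * a + U * b * c = UU (a + d) (n + 1) * a - U := by
      rw [key]; linear_combination (-U) * h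
    have e2 : (U * a - V) * b + U * b * d = UU (a + d) (n + 1) * b := by
      rw [key]; ring
    have e3 : U * c * a + (U * d - V) * c = UU (a + d) (n + 1) * c := by
      rw [key]; ring
    have e4 : U * c * b + (U * d - V) * d = UU (a + d) (n + 1) * d - U := by
      rw [key]; linear_combination (-U) * h
    refine ⟨U, ?_, ?_, ?_⟩
    · rw [← e1, ← e2, ← e3, ← e4]
      linear_combination (a * d - b * c) * h' + h
    · rw [hp, mk2_inj]
      exact ⟨e1, e2, e3, e4⟩
    · show (a + d) * UU (a + d) (n + 1) - UU (a + d) n = _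
      ring

lemma JJ_mk2 (a b c d h p q r s h') : JJ (mk2 a b c d h) (mk2 p q r s h') =
    (b * r - q * c) ^ 2 + (a * q + b * s - p * b - q * d) * (c * p + d * r - r * a - s * c) := by
  simp only [JJ, mk2_inv, mk2_mul, tr2_mk2]
  linear_combination (2*p*s - 2*q*r) * h + 2 * h'

lemma JJ_pow (g h : SL2R) (n : ℕ) : JJ g (h ^ n) = UU (tr2 h) n ^ 2 * JJ g h := by
  obtain ⟨a, b, c, d, hg, rfl⟩ := exists_mk2 g
  obtain ⟨p, q, r, s, hh, rfl⟩ := exists_mk2 h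
  obtain ⟨V, h', e, -⟩ := pow_mk2 p q r s hh n
  rw [e, JJ_mk2, JJ_mk2, tr2_mk2]
  ring

/-- If `k` commutes with a positive power of a non-elliptic `g` then it commutes with `g`. -/
lemma commute_of_pow (g k : SL2R) (hg : 2 ≤ |tr2 g|) (n : ℕ) (hn : 0 < n)
    (hc : g ^ n * k = k * g ^ n) : g * k = k * g := by
  obtain ⟨a, b, c, d, hh, rfl⟩ := exists_mk2 g
  obtain ⟨p, q, r, s, hk, rfl⟩ := exists_mk2 k
  obtain ⟨V, h', e, -⟩ := pow_mk2 a b c d hh n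
  rw [tr2_mk2] at hg
  have hU := UU_ge _ hg n
  have hU0 : UU (a + d) n ≠ 0 := by
    intro h0
    rw [h0] at hU
    have : (0 : ℝ) < n := by exact_mod_cast hn
    simp at hU
    omega
  rw [e, mk2_mul, mk2_mul, mk2_inj] at hc
  rw [mk2_mul, mk2_mul, mk2_inj]
  obtain ⟨h1, h2, h3, h4⟩ := hc
  refine ⟨?_, ?_, ?_, ?_⟩ <;> apply mul_left_cancel₀ hU0 <;> linarith

/-! ### Simultaneous triangular form -/

lemma exists_eig (a b c d α : ℝ) (h : a * d - b * c = 1) (hα : α ^ 2 - (a + d) * α + 1 = 0) :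
    ∃ p r : ℝ, (p ≠ 0 ∨ r ≠ 0) ∧ a * p + b * r = α * p ∧ c * p + d * r = α * r := by
  by_cases hb : b = 0
  · by_cases hc : c = 0
    · subst hb hc
      have : (α - a) * (α - d) = 0 := by linear_combination hα + h
      rcases mul_eq_zero.mp this with h0 | h0
      · exact ⟨1, 0, by simp, by linarith, by simp⟩
      · exact ⟨0, 1, by simp, by simp, by linarith⟩
    · exact ⟨α - d, c, Or.inr hc, by linear_combination (-1) * hα - h, by ring⟩
  · exact ⟨b, α - a, Or.inl hb, by ring, by linear_combination (-1) * hα - h⟩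

/-- Simultaneous triangular form. -/
def Tri (A B : SL2R) : Prop :=
  ∃ (P : SL2R) (α β δ : ℝ) (h1 : α * α⁻¹ - β * 0 = 1) (h2 : α * α⁻¹ - 0 * δ = 1),
    α ≠ 0 ∧ P⁻¹ * A * P = mk2 α β 0 α⁻¹ h1 ∧ P⁻¹ * B * P = mk2 α 0 δ α⁻¹ h2

lemma tri_of_eig (a b c d h a' b' c' d' h' : _) (α : ℝ) (hα : α ≠ 0) (p r q s : ℝ)
    (e1 : a * p + b * r = α * p) (e2 : c * p + d * r = α * r)
    (f1 : a' * q + b' * s = α⁻¹ * q) (f2 : c' * q + d' * s = α⁻¹ * s)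
    (hd : p * s - q * r ≠ 0) : Tri (mk2 a b c d h) (mk2 a' b' c' d' h') := by
  set D := p * s - q * r with hD
  have hP : p * (s / D) - (q / D) * r = 1 := by
    field_simp
    linarith
  have g1 : a' * (q / D) + b' * (s / D) = α⁻¹ * (q / D) := by
    linear_combination f1 / D
  have g2 : c' * (q / D) + d' * (s / D) = α⁻¹ * (s / D) := by
    linear_combination f2 / D
  generalize q / D = Q at *
  generalize s / D = S at *
  have hαi : α * α⁻¹ = 1 := mul_inv_cancel₀ hα
  refine ⟨mk2 p Q r S hP, α, S * (a * Q + b * S) - Q * (c * Q + d * S),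
    -r * (a' * p + b' * r) + p * (c' * p + d' * r), by simp [hα], by simp [hα], hα, ?_, ?_⟩
  · rw [mk2_inv, mk2_mul, mk2_mul, mk2_inj]
    have t1 : (S * a + -Q * c) * p + (S * b + -Q * d) * r = α := by
      linear_combination S * e1 - Q * e2 + α * hP
    have t3 : (-r * a + p * c) * p + (-r * b + p * d) * r = 0 := by
      linear_combination (-r) * e1 + p * e2
    refine ⟨t1, by ring, t3, ?_⟩
    have hdet : ((S * a + -Q * c) * p + (S * b + -Q * d) * r) *
        ((-r * a + p * c) * Q + (-r * b + p * d) * S) -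
        ((S * a + -Q * c) * Q + (S * b + -Q * d) * S) *
        ((-r * a + p * c) * p + (-r * b + p * d) * r) = 1 := by
      linear_combination (p * S - Q * r) ^ 2 * h + (p * S - Q * r + 1) * hP
    rw [t1, t3, mul_zero, sub_zero] at hdet
    exact eq_inv_of_mul_eq_one_right hdet
  · rw [mk2_inv, mk2_mul, mk2_mul, mk2_inj]
    have t4 : (-r * a' + p * c') * Q + (-r * b' + p * d') * S = α⁻¹ := by
      linear_combination (-r) * g1 + p * g2 + α⁻¹ * hP
    have t2 : (S * a' + -Q * c') * Q + (S * b' + -Q * d') * S = 0 := by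
      linear_combination S * g1 - Q * g2
    refine ⟨?_, t2, by ring, t4⟩
    have hdet : ((S * a' + -Q * c') * p + (S * b' + -Q * d') * r) *
        ((-r * a' + p * c') * Q + (-r * b' + p * d') * S) -
        ((S * a' + -Q * c') * Q + (S * b' + -Q * d') * S) *
        ((-r * a' + p * c') * p + (-r * b' + p * d') * r) = 1 := by
      linear_combination (p * S - Q * r) ^ 2 * h' + (p * S - Q * r + 1) * hP
    rw [t4, t2, zero_mul, sub_zero] at hdet
    have := eq_inv_of_mul_eq_one_left hdet
    rwa [inv_inv] at this

/-- Parallel vectors. -/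
lemma parallel {p r q s : ℝ} (h0 : p ≠ 0 ∨ r ≠ 0) (hd : p * s - q * r = 0) :
    ∃ l : ℝ, q = l * p ∧ s = l * r := by
  rcases h0 with h0 | h0
  · refine ⟨q / p, by field_simp, ?_⟩
    field_simp
    linarith
  · refine ⟨s / r, ?_, by field_simp⟩
    field_simp
    linarith

lemma eig_parallel {a b c d α p r q s : ℝ} (_h0 : p ≠ 0 ∨ r ≠ 0) (h1 : q ≠ 0 ∨ s ≠ 0)
    (hd : p * s - q * r = 0) (e1 : a * q + b * s = α * q) (e2 : c * q + d * s = α * s) :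
    a * p + b * r = α * p ∧ c * p + d * r = α * r := by
  obtain ⟨l, hl, hl'⟩ := parallel (p := q) (r := s) (q := p) (s := r) h1 (by linarith)
  constructor
  · rw [hl, hl']; linear_combination l * e1
  · rw [hl, hl']; linear_combination l * e2

lemma tri_or (A B : SL2R) (htr : tr2 A = tr2 B) (ht : 2 ≤ |tr2 A|) :
    (A * B = B * A ∧ tr2 (A * B) = 2) ∨ Tri A B := by
  obtain ⟨a, b, c, d, h, rfl⟩ := exists_mk2 A
  obtain ⟨a', b', c', d', h', rfl⟩ := exists_mk2 B
  rw [tr2_mk2, tr2_mk2] at htr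
  rw [tr2_mk2] at ht
  by_cases hT : Tri (mk2 a b c d h) (mk2 a' b' c' d' h')
  · exact Or.inr hT
  left
  obtain ⟨α, hα⟩ : ∃ α : ℝ, α ^ 2 - (a + d) * α + 1 = 0 := by
    have h4 : 4 ≤ (a + d) ^ 2 := by
      rw [← sq_abs]
      nlinarith
    refine ⟨((a + d) + √((a + d) ^ 2 - 4)) / 2, ?_⟩
    have := Real.sq_sqrt (show 0 ≤ (a + d) ^ 2 - 4 by linarith)
    linear_combination this / 4
  have hα0 : α ≠ 0 := by
    rintro rfl
    norm_num at hα
  have hαi : α * α⁻¹ = 1 := mul_inv_cancel₀ hα0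
  have hαinv : α⁻¹ ^ 2 - (a + d) * α⁻¹ + 1 = 0 := by
    field_simp
    linarith
  obtain ⟨p, r, h0, e1, e2⟩ := exists_eig a b c d α h hα
  obtain ⟨q, s, k0, f1, f2⟩ := exists_eig a' b' c' d' α⁻¹ h' (by rw [← htr]; exact hαinv)
  have hd1 : p * s - q * r = 0 := by
    by_contra hne
    exact hT (tri_of_eig _ _ _ _ _ _ _ _ _ _ α hα0 p r q s e1 e2 f1 f2 hne)
  obtain ⟨f1', f2'⟩ := eig_parallel h0 k0 hd1 f1 f2
  obtain ⟨p', r', h0', e1', e2'⟩ := exists_eig a b c d α⁻¹ h hαinv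
  obtain ⟨q', s', k0', g1, g2⟩ := exists_eig a' b' c' d' α h' (by rw [← htr]; exact hα)
  have hd2 : p' * s' - q' * r' = 0 := by
    by_contra hne
    exact hT (tri_of_eig _ _ _ _ _ _ _ _ _ _ α⁻¹ (inv_ne_zero hα0) p' r' q' s' e1' e2'
      (by rwa [inv_inv]) (by rwa [inv_inv]) hne)
  obtain ⟨g1', g2'⟩ := eig_parallel h0' k0' hd2 g1 g2
  by_cases hD : p * r' - p' * r = 0
  · obtain ⟨l1, l2⟩ := eig_parallel h0 h0' hD e1' e2'
    have hself : α⁻¹ = α := by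
      rcases h0 with h0 | h0
      · exact mul_right_cancel₀ h0 (by linarith)
      · exact mul_right_cancel₀ h0 (by linarith)
    have hsq : α * α = 1 := by rw [hself] at hαi; exact hαi
    rw [hself] at f1' f2'
    have htr2 : a + d = 2 * α := by
      have : (a + d) * α = 2 := by nlinarith
      calc a + d = (a + d) * α * α := by rw [mul_assoc, hsq, mul_one]
        _ = 2 * α := by rw [this]
    -- both are `α + nilpotent` with the same kernel
    have hbr : b * r = (α - a) * p := by linarith
    have hcp : c * p = (a - α) * r := by linear_combination e2 - r * htr2
    have hbr' : b' * r = (α - a') * p := by linarith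
    have hcp' : c' * p = (a' - α) * r := by linear_combination f2' - r * htr2 - r * (-htr)
    have hd : d = 2 * α - a := by linarith
    have hd' : d' = 2 * α - a' := by linarith
    have k1 : b * c' = -(a - α) * (a' - α) ∧ b' * c = -(a - α) * (a' - α)
        ∧ (a - α) * b' = (a' - α) * b ∧ (a - α) * c' = (a' - α) * c := by
      rcases h0 with h0 | h0
      · have hc : c = (a - α) * (r / p) := by field_simp; linarith
        have hc' : c' = (a' - α) * (r / p) := by field_simp; linarith
        have ha : a - α = - b * (r / p) := by field_simp; linarith
        have ha' : a' - α = - b' * (r / p) := by field_simp; linarith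
        generalize r / p = m at *
        rw [hc, hc', ha, ha']
        refine ⟨by ring, by ring, by ring, by ring⟩
      · have hb : b = (α - a) * (p / r) := by field_simp; linarith
        have hb' : b' = (α - a') * (p / r) := by field_simp; linarith
        have ha : a - α = c * (p / r) := by field_simp; linarith
        have ha' : a' - α = c' * (p / r) := by field_simp; linarith
        have ea : a = α + c * (p / r) := by linarith
        have ea' : a' = α + c' * (p / r) := by linarith
        generalize p / r = m at *
        rw [hb, hb', ea, ea']
        refine ⟨by ring, by ring, by ring, by ring⟩
    obtain ⟨k1, k2, k3, k4⟩ := k1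
    rw [mk2_mul, mk2_mul, mk2_inj, tr2_mk2]
    subst hd hd'
    refine ⟨⟨by linarith, ?_, ?_, by linarith⟩, ?_⟩
    · linear_combination 2 * k3
    · linear_combination -2 * k4
    · linear_combination k1 + k2 + 2 * hsq
  · -- here `A * B = 1`
    have hAB : mk2 a b c d h * mk2 a' b' c' d' h' = 1 := by
      have hm : ∀ x y : ℝ, x * p + y * r = 0 → x * p' + y * r' = 0 → x = 0 ∧ y = 0 := by
        intro x y hx hy
        constructor
        · apply mul_right_cancel₀ hD
          linear_combination r' * hx - r * hy
        · apply mul_right_cancel₀ hD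
          linear_combination p * hy - p' * hx
      rw [mk2_mul, one_mk2, mk2_inj]
      obtain ⟨u1, u2⟩ := hm (a * a' + b * c' - 1) (a * b' + b * d')
        (by linear_combination a * f1' + b * f2' + α⁻¹ * e1 + p * hαi)
        (by linear_combination a * g1' + b * g2' + α * e1' + p' * hαi)
      obtain ⟨u3, u4⟩ := hm (c * a' + d * c') (c * b' + d * d' - 1)
        (by linear_combination c * f1' + d * f2' + α⁻¹ * e2 + r * hαi)
        (by linear_combination c * g1' + d * g2' + α * e2' + r' * hαi)
      refine ⟨by linarith, u2, u3, by linarith⟩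
    refine ⟨?_, ?_⟩
    · rw [hAB, mul_eq_one_comm.mp hAB]
    · rw [hAB, one_mk2, tr2_mk2]
      norm_num

/-! ### Ping-pong -/

/-- Nonzero vectors of the plane. -/
def NZ := {v : ℝ × ℝ // v ≠ 0}

lemma smul_ne (g : SL2R) (v : ℝ × ℝ) (hv : v ≠ 0) :
    (g 0 0 * v.1 + g 0 1 * v.2, g 1 0 * v.1 + g 1 1 * v.2) ≠ (0 : ℝ × ℝ) := by
  intro h
  have hdet := g.2
  rw [Matrix.det_fin_two] at hdet
  change g 0 0 * g 1 1 - g 0 1 * g 1 0 = 1 at hdet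
  have h1 : g 0 0 * v.1 + g 0 1 * v.2 = 0 := congrArg Prod.fst h
  have h2 : g 1 0 * v.1 + g 1 1 * v.2 = 0 := congrArg Prod.snd h
  apply hv
  ext
  · show v.1 = 0
    linear_combination (-v.1) * hdet + g 1 1 * h1 - g 0 1 * h2
  · show v.2 = 0
    linear_combination (-v.2) * hdet - g 1 0 * h1 + g 0 0 * h2

noncomputable instance actNZ : MulAction SL2R NZ where
  smul g v := ⟨_, smul_ne g v.1 v.2⟩
  one_smul v := by
    apply Subtype.ext
    show ((1 : SL2R) 0 0 * v.1.1 + (1 : SL2R) 0 1 * v.1.2,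
      (1 : SL2R) 1 0 * v.1.1 + (1 : SL2R) 1 1 * v.1.2) = v.1
    simp
  mul_smul g h v := by
    apply Subtype.ext
    show ((g * h) 0 0 * v.1.1 + (g * h) 0 1 * v.1.2,
      (g * h) 1 0 * v.1.1 + (g * h) 1 1 * v.1.2) =
      (g 0 0 * (h 0 0 * v.1.1 + h 0 1 * v.1.2) + g 0 1 * (h 1 0 * v.1.1 + h 1 1 * v.1.2),
       g 1 0 * (h 0 0 * v.1.1 + h 0 1 * v.1.2) + g 1 1 * (h 1 0 * v.1.1 + h 1 1 * v.1.2))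
    simp only [Matrix.SpecialLinearGroup.coe_mul, Matrix.mul_apply, Fin.sum_univ_two]
    ext <;> ring

lemma mk2_smul_fst (a b c d h) (v : NZ) : (mk2 a b c d h • v).1.1 = a * v.1.1 + b * v.1.2 := rfl

lemma mk2_smul_snd (a b c d h) (v : NZ) : (mk2 a b c d h • v).1.2 = c * v.1.1 + d * v.1.2 := rfl

lemma NZ_pos (v : NZ) : v.1.1 ≠ 0 ∨ v.1.2 ≠ 0 := by
  by_contra hcon
  push Not at hcon
  exact v.2 (Prod.ext hcon.1 hcon.2)

open scoped Pointwise in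
/-- Ping-pong for a pair in triangular form. -/
lemma free_tri (α β δ : ℝ) (hα : α ≠ 0) (h1 h2)
    (hm : α ^ 2 + α⁻¹ ^ 2 + β * δ ≤ -2) :
    Function.Injective (FreeGroup.lift ![mk2 α β 0 α⁻¹ h1, mk2 α 0 δ α⁻¹ h2]) := by
  have hβ : β ≠ 0 := by
    rintro rfl
    have := sq_nonneg α
    have := sq_nonneg α⁻¹
    linarith
  have hai : α * α⁻¹ = 1 := mul_inv_cancel₀ hα
  set γ := α⁻¹ with hγ
  set s := 1 + α ^ 2 with hs
  have hs1 : 0 < s := by positivity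
  have ha2 : 0 < α ^ 2 := by positivity
  have hu : α * β ≠ 0 := mul_ne_zero hα hβ
  -- the key inequality
  have key : s + s * α ^ 2 + α ^ 2 * (β * δ) ≤ 0 := by
    have : α ^ 2 * (α ^ 2 + γ ^ 2 + β * δ) ≤ α ^ 2 * (-2) := by gcongr
    have e : α ^ 2 * γ ^ 2 = 1 := by rw [← mul_pow, hai, one_pow]
    rw [hs]
    nlinarith
  let Xf : NZ → ℝ := fun v => v.1.1
  let Yf : NZ → ℝ := fun v => α * β * v.1.2
  have hne : ∀ v : NZ, 0 < Xf v ^ 2 + Yf v ^ 2 := by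
    intro v
    rcases NZ_pos v with h | h
    · have : Xf v ≠ 0 := h
      positivity
    · have : Yf v ≠ 0 := mul_ne_zero hu h
      positivity
  let XA : Set NZ := {v | Yf v ^ 2 ≤ s * (Xf v * Yf v)}
  let YA : Set NZ := {v | s * (Xf v * Yf v) < - Yf v ^ 2}
  let XB : Set NZ := {v | Xf v * Yf v ≤ - (s * Xf v ^ 2)}
  let YB : Set NZ := {v | s * Xf v ^ 2 < Xf v * Yf v}
  -- disjointness helpers
  have dAB : ∀ v : NZ, 0 ≤ Xf v * Yf v → Xf v * Yf v ≤ - (s * Xf v ^ 2) →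
      Yf v ^ 2 ≤ s * (Xf v * Yf v) → False := by
    intro v h1 h2 h3
    have hx : 0 ≤ s * Xf v ^ 2 := by positivity
    have h0 : Xf v * Yf v = 0 := by linarith
    rw [h0] at h2 h3
    have hx0 : s * Xf v ^ 2 = 0 := by linarith
    have := hne v
    have hx1 : Xf v ^ 2 = 0 := by
      rcases mul_eq_zero.mp hx0 with h | h
      · exact absurd h hs1.ne'
      · exact h
    linarith
  apply FreeGroup.injective_lift_of_ping_pong (α := NZ) ![mk2 α β 0 γ h1, mk2 α 0 δ γ h2]
    ![XA, XB] (Y := ![YA, YB])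
  · intro i
    fin_cases i
    · refine ⟨⟨(1, 0), by simp⟩, ?_⟩
      show (α * β * 0) ^ 2 ≤ s * (1 * (α * β * 0))
      simp
    · refine ⟨⟨(0, 1), by simp⟩, ?_⟩
      show 0 * (α * β * 1) ≤ - (s * 0 ^ 2)
      simp
  · have : Disjoint XA XB := by
      rw [Set.disjoint_left]
      intro v hv hw
      have hv' : Yf v ^ 2 ≤ s * (Xf v * Yf v) := hv
      have h0 : 0 ≤ Xf v * Yf v := by
        have := sq_nonneg (Yf v)
        by_contra hcon
        push Not at hcon
        have := mul_neg_of_pos_of_neg hs1 hcon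
        linarith
      exact dAB v h0 hw hv'
    intro i j hij
    fin_cases i <;> fin_cases j
    · exact absurd rfl hij
    · exact this
    · exact this.symm
    · exact absurd rfl hij
  · have : Disjoint YA YB := by
      rw [Set.disjoint_left]
      intro v hv hw
      have hv' : s * (Xf v * Yf v) < - Yf v ^ 2 := hv
      have hw' : s * Xf v ^ 2 < Xf v * Yf v := hw
      have h1 : 0 < Xf v * Yf v := lt_of_le_of_lt (by positivity) hw'
      have := mul_pos hs1 h1
      have := sq_nonneg (Yf v)
      linarith
    intro i j hij
    fin_cases i <;> fin_cases j
    · exact absurd rfl hij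
    · exact this
    · exact this.symm
    · exact absurd rfl hij
  · have hAA : Disjoint XA YA := by
      rw [Set.disjoint_left]
      intro v hv hw
      have hv' : Yf v ^ 2 ≤ s * (Xf v * Yf v) := hv
      have hw' : s * (Xf v * Yf v) < - Yf v ^ 2 := hw
      have := sq_nonneg (Yf v)
      linarith
    have hBB : Disjoint XB YB := by
      rw [Set.disjoint_left]
      intro v hv hw
      have hv' : Xf v * Yf v ≤ - (s * Xf v ^ 2) := hv
      have hw' : s * Xf v ^ 2 < Xf v * Yf v := hw
      have : 0 ≤ s * Xf v ^ 2 := by positivity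
      linarith
    have hABd : Disjoint XA YB := by
      rw [Set.disjoint_left]
      intro v hv hw
      have hv' : Yf v ^ 2 ≤ s * (Xf v * Yf v) := hv
      have hw' : s * Xf v ^ 2 < Xf v * Yf v := hw
      have h1 : 0 < Xf v * Yf v := lt_of_le_of_lt (by positivity) hw'
      have h2 : (s * Xf v ^ 2) * Yf v ^ 2 ≤ (s * Xf v ^ 2) * (s * (Xf v * Yf v)) := by gcongr
      have h3 : (s * Xf v ^ 2) * (s * (Xf v * Yf v)) < (Xf v * Yf v) * (s * (Xf v * Yf v)) := by
        gcongr
      nlinarith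
    have hBA : Disjoint XB YA := by
      rw [Set.disjoint_left]
      intro v hv hw
      have hv' : Xf v * Yf v ≤ - (s * Xf v ^ 2) := hv
      have hw' : s * (Xf v * Yf v) < - Yf v ^ 2 := hw
      have h1 : 0 < -(Xf v * Yf v) := by
        by_contra hcon
        push Not at hcon
        have : 0 ≤ s * (Xf v * Yf v) := mul_nonneg hs1.le (by linarith)
        have := sq_nonneg (Yf v)
        linarith
      have h2 : (s * Xf v ^ 2) * Yf v ^ 2 ≤ (-(Xf v * Yf v)) * Yf v ^ 2 := by
        gcongr
        linarith
      have h3 : (-(Xf v * Yf v)) * Yf v ^ 2 < (-(Xf v * Yf v)) * (s * (-(Xf v * Yf v))) := by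
        gcongr
        linarith
      nlinarith
    intro i j
    fin_cases i <;> fin_cases j
    · exact hAA
    · exact hABd
    · exact hBA
    · exact hBB
  · have hA : mk2 α β 0 γ h1 • YAᶜ ⊆ XA := by
      rintro _ ⟨v, hv, rfl⟩
      have hv' : ¬ (s * (v.1.1 * (α * β * v.1.2)) < - (α * β * v.1.2) ^ 2) := hv
      show (α * β * (0 * v.1.1 + γ * v.1.2)) ^ 2 ≤
        s * ((α * v.1.1 + β * v.1.2) * (α * β * (0 * v.1.1 + γ * v.1.2)))
      push Not at hv'
      have e1 : (α * β * (0 * v.1.1 + γ * v.1.2)) = β * v.1.2 := by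
        linear_combination β * v.1.2 * hai
      rw [e1]
      generalize v.1.2 = y at *
      generalize v.1.1 = x at *
      rw [hs] at hv' ⊢
      nlinarith
    have hB : mk2 α 0 δ γ h2 • YBᶜ ⊆ XB := by
      rintro _ ⟨v, hv, rfl⟩
      have hv' : ¬ (s * v.1.1 ^ 2 < v.1.1 * (α * β * v.1.2)) := hv
      show (α * v.1.1 + 0 * v.1.2) * (α * β * (δ * v.1.1 + γ * v.1.2)) ≤
        - (s * (α * v.1.1 + 0 * v.1.2) ^ 2)
      push Not at hv'
      generalize v.1.2 = y at *
      generalize v.1.1 = x at *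
      have e1 : (α * x + 0 * y) * (α * β * (δ * x + γ * y)) =
          α ^ 2 * (β * δ) * x ^ 2 + x * (α * β * y) := by
        linear_combination (α * β * x * y) * hai
      rw [e1]
      have := mul_nonneg_of_nonpos_of_nonpos key (neg_nonpos.mpr (sq_nonneg x))
      nlinarith
    intro i
    fin_cases i
    · exact hA
    · exact hB
  · have hA : (mk2 α β 0 γ h1)⁻¹ • XAᶜ ⊆ YA := by
      rw [mk2_inv]
      rintro _ ⟨v, hv, rfl⟩
      have hv' : ¬ ((α * β * v.1.2) ^ 2 ≤ s * (v.1.1 * (α * β * v.1.2))) := hv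
      show s * ((γ * v.1.1 + -β * v.1.2) * (α * β * (-0 * v.1.1 + α * v.1.2))) <
        - (α * β * (-0 * v.1.1 + α * v.1.2)) ^ 2
      push Not at hv'
      generalize v.1.2 = y at *
      generalize v.1.1 = x at *
      have e1 : s * ((γ * x + -β * y) * (α * β * (-0 * x + α * y))) =
          s * (x * (α * β * y)) - s * (α * β * y) ^ 2 := by
        linear_combination (s * x * α * β * y) * hai
      rw [e1, hs]
      rw [hs] at hv'
      nlinarith
    have hB : (mk2 α 0 δ γ h2)⁻¹ • XBᶜ ⊆ YB := by
      rw [mk2_inv]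
      rintro _ ⟨v, hv, rfl⟩
      have hv' : ¬ (v.1.1 * (α * β * v.1.2) ≤ - (s * v.1.1 ^ 2)) := hv
      show s * (γ * v.1.1 + -0 * v.1.2) ^ 2 <
        (γ * v.1.1 + -0 * v.1.2) * (α * β * (-δ * v.1.1 + α * v.1.2))
      push Not at hv'
      generalize v.1.2 = y at *
      generalize v.1.1 = x at *
      have e1 : (γ * x + -0 * y) * (α * β * (-δ * x + α * y)) =
          - (β * δ) * x ^ 2 + x * (α * β * y) := by
        linear_combination (-(β * δ) * x ^ 2 + x * α * β * y) * hai
      rw [e1]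
      have k2 : s * γ ^ 2 + s + β * δ ≤ 0 := by
        have hg2 : 0 ≤ γ ^ 2 := sq_nonneg γ
        have e : γ ^ 2 * α ^ 2 = 1 := by rw [← mul_pow, mul_comm γ α, hai, one_pow]
        have := mul_nonneg_of_nonpos_of_nonpos key (neg_nonpos.mpr hg2)
        have e3 : (s + s * α ^ 2 + α ^ 2 * (β * δ)) * -γ ^ 2 =
          -(s * γ ^ 2 + s + β * δ) := by linear_combination (-s - β * δ) * e
        linarith
      have := mul_nonneg_of_nonpos_of_nonpos k2 (neg_nonpos.mpr (sq_nonneg x))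
      nlinarith
    intro i
    fin_cases i
    · exact hA
    · exact hB

lemma lift_conj (P A B : SL2R) (w : FreeGroup (Fin 2)) :
    FreeGroup.lift ![P⁻¹ * A * P, P⁻¹ * B * P] w = P⁻¹ * FreeGroup.lift ![A, B] w * P := by
  have : FreeGroup.lift ![P⁻¹ * A * P, P⁻¹ * B * P] =
      (MulAut.conj P⁻¹).toMonoidHom.comp (FreeGroup.lift ![A, B]) := by
    ext i
    fin_cases i <;> simp
  rw [this]
  simp

/-- Pairs with equal trace and very negative trace of the product generate a free group. -/
lemma free_of_trace (A B : SL2R) (htr : tr2 A = tr2 B) (ht : 2 ≤ |tr2 A|)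
    (hAB : tr2 (A * B) ≤ -2) : Function.Injective (FreeGroup.lift ![A, B]) := by
  rcases tri_or A B htr ht with ⟨-, h⟩ | ⟨P, α, β, δ, h1, h2, hα, eA, eB⟩
  · rw [h] at hAB
    norm_num at hAB
  · have htP : tr2 (A * B) = α ^ 2 + α⁻¹ ^ 2 + β * δ := by
      rw [← tr2_conj (A * B) P⁻¹, inv_inv]
      have : P⁻¹ * (A * B) * P = (P⁻¹ * A * P) * (P⁻¹ * B * P) := by group
      rw [this, eA, eB, mk2_mul, tr2_mk2]
      ring
    have hf := free_tri α β δ hα h1 h2 (by rw [← htP]; exact hAB)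
    rw [← eA, ← eB] at hf
    intro w w' hw
    apply hf
    rw [lift_conj, lift_conj, hw]

lemma inj_inv (A B : SL2R) (h : Function.Injective (FreeGroup.lift ![A, B⁻¹])) :
    Function.Injective (FreeGroup.lift ![A, B]) := by
  let φ : FreeGroup (Fin 2) →* FreeGroup (Fin 2) :=
    FreeGroup.lift ![FreeGroup.of 0, (FreeGroup.of 1)⁻¹]
  have hφ : ∀ w, φ (φ w) = w := by
    intro w
    have : φ.comp φ = MonoidHom.id _ := by
      ext i
      fin_cases i <;> simp [φ]
    exact DFunLike.congr_fun this w
  have e : FreeGroup.lift ![A, B] = (FreeGroup.lift ![A, B⁻¹]).comp φ := by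
    ext i : 1
    fin_cases i <;> simp [φ]
  rw [e]
  intro w w2 hw
  have := h hw
  rw [← hφ w, ← hφ w2, this]

/-- From `SL` to `PSL`. -/
lemma inj_PSL (A B : SL2R) (h : Function.Injective (FreeGroup.lift ![A, B])) :
    Function.Injective (FreeGroup.lift
      ![QuotientGroup.mk' (Subgroup.center SL2R) A,
        QuotientGroup.mk' (Subgroup.center SL2R) B] :
        FreeGroup (Fin 2) →* SL2R ⧸ Subgroup.center SL2R) := by
  have e : (FreeGroup.lift
      ![QuotientGroup.mk' (Subgroup.center SL2R) A,
        QuotientGroup.mk' (Subgroup.center SL2R) B] :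
        FreeGroup (Fin 2) →* SL2R ⧸ Subgroup.center SL2R) =
      (QuotientGroup.mk' (Subgroup.center SL2R)).comp (FreeGroup.lift ![A, B]) := by
    ext i
    fin_cases i <;> simp
  rw [e, injective_iff_map_eq_one]
  intro w hw
  have hw' : FreeGroup.lift ![A, B] w ∈ Subgroup.center SL2R := by
    rw [← QuotientGroup.eq_one_iff]
    exact hw
  have hsq : FreeGroup.lift ![A, B] w ^ 2 = 1 := by
    obtain ⟨r, hr, hr'⟩ := Matrix.SpecialLinearGroup.mem_center_iff.mp hw'
    apply Subtype.ext
    rw [Matrix.SpecialLinearGroup.coe_pow, ← hr', ← map_pow]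
    simp at hr
    rcases hr with rfl | rfl <;> simp
  rw [← map_pow] at hsq
  have : w ^ 2 = 1 := h (by rw [hsq, map_one])
  exact (pow_eq_one_iff_left (n := 2) (by norm_num)).mp this

/-! ### Displacements -/

lemma cosh_dist_I (a b c d h) : Real.cosh (dist UpperHalfPlane.I (mk2 a b c d h • UpperHalfPlane.I)) =
    (a ^ 2 + b ^ 2 + c ^ 2 + d ^ 2) / 2 := by
  have hpos : 0 < c ^ 2 + d ^ 2 := by
    by_contra hcon
    have hc : c = 0 := by nlinarith [sq_nonneg c, sq_nonneg d]
    have hd : d = 0 := by nlinarith [sq_nonneg c, sq_nonneg d]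
    rw [hc, hd] at h
    norm_num at h
  have hz : ((mk2 a b c d h • UpperHalfPlane.I : ℍ) : ℂ) =
      ((a : ℂ) * Complex.I + b) / ((c : ℂ) * Complex.I + d) := by
    rw [UpperHalfPlane.coe_specialLinearGroup_apply]
    simp [mk2]
  have hre : (mk2 a b c d h • UpperHalfPlane.I : ℍ).re = (a * c + b * d) / (c ^ 2 + d ^ 2) := by
    rw [← UpperHalfPlane.coe_re, hz, Complex.div_re]
    simp [Complex.normSq_apply]
    rw [show d * d + c * c = c ^ 2 + d ^ 2 by ring]
    ring
  have him : (mk2 a b c d h • UpperHalfPlane.I : ℍ).im = 1 / (c ^ 2 + d ^ 2) := by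
    rw [← UpperHalfPlane.coe_im, hz, Complex.div_im]
    simp [Complex.normSq_apply]
    rw [show d * d + c * c = c ^ 2 + d ^ 2 by ring]
    field_simp
    linarith
  rw [UpperHalfPlane.cosh_dist', hre, him]
  simp only [UpperHalfPlane.I_re, UpperHalfPlane.I_im]
  field_simp
  linear_combination (a * d - b * c + 1) * (-h)

lemma dist_conj (P A : SL2R) (x : ℍ) : dist (P • x) (A • P • x) = dist x ((P⁻¹ * A * P) • x) := by
  rw [← dist_smul P x, smul_smul, smul_smul]
  congr 2
  group

lemma trace_le_of_dist (g : SL2R) (x : ℍ) : tr2 g ^ 2 - 2 ≤ 2 * Real.cosh (dist x (g • x)) := by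
  obtain ⟨P, rfl⟩ := MulAction.exists_smul_eq SL2R UpperHalfPlane.I x
  rw [dist_conj]
  have e : tr2 g = tr2 (P⁻¹ * g * P) := by
    have := tr2_conj g P⁻¹
    rw [inv_inv] at this
    exact this.symm
  rw [e]
  obtain ⟨a, b, c, d, h, e'⟩ := exists_mk2 (P⁻¹ * g * P)
  rw [e', cosh_dist_I, tr2_mk2]
  nlinarith [sq_nonneg (b - c)]

lemma trace_le_of_translationLength (g : SL2R) (T : ℝ) (hT : 0 ≤ T) (h : translationLength g ≤ T) :
    tr2 g ^ 2 - 2 ≤ 2 * Real.cosh T := by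
  by_contra hcon
  push Not at hcon
  -- by continuity there is room
  have hev : ∀ᶠ y in nhds T, 2 * Real.cosh y < tr2 g ^ 2 - 2 :=
    (by fun_prop : Continuous fun y : ℝ => 2 * Real.cosh y).continuousAt.eventually_lt
      continuousAt_const hcon
  obtain ⟨η, hη, hball⟩ := Metric.eventually_nhds_iff.mp hev
  have hT' := hball (y := T + η / 2) (by
    rw [Real.dist_eq, add_sub_cancel_left, abs_of_pos (by linarith)]
    linarith)
  have hlt : translationLength g < T + η / 2 := by linarith
  obtain ⟨x, hx⟩ := exists_lt_of_ciInf_lt hlt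
  have h1 := trace_le_of_dist g x
  have h2 : Real.cosh (dist x (g • x)) ≤ Real.cosh (T + η / 2) := by
    rw [Real.cosh_le_cosh, abs_of_nonneg dist_nonneg, abs_of_nonneg (by linarith)]
    exact hx.le
  linarith

/-! ### Virtual abelianness and discreteness -/

lemma virtAb_of_comm (g h : SL2R) (hc : g * h = h * g) :
    VirtuallyAbelian ↥(Subgroup.closure ({g, h} : Set SL2R)) := by
  refine ⟨⊤, inferInstance, ?_⟩
  have hcomm : ∀ x ∈ ({g, h} : Set SL2R), ∀ y ∈ ({g, h} : Set SL2R), x * y = y * x := by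
    rintro x (rfl | rfl) y (rfl | rfl)
    · rfl
    · exact hc
    · exact hc.symm
    · rfl
  have := Subgroup.isMulCommutative_closure hcomm
  intro a _ b _
  exact this.is_comm.comm a b

lemma comm_of_virtAb (S : Set SL2R) (hS : VirtuallyAbelian ↥(Subgroup.closure S)) (g k : SL2R)
    (hg : g ∈ S) (hk : k ∈ S) (tg : 2 ≤ |tr2 g|) (tk : 2 ≤ |tr2 k|) : g * k = k * g := by
  obtain ⟨H, hfin, hab⟩ := hS
  let g' : Subgroup.closure S := ⟨g, Subgroup.subset_closure hg⟩
  let k' : Subgroup.closure S := ⟨k, Subgroup.subset_closure hk⟩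
  obtain ⟨n, hn, -, hgn⟩ := Subgroup.exists_pow_mem_of_index_ne_zero hfin.index_ne_zero g'
  obtain ⟨m, hm, -, hkm⟩ := Subgroup.exists_pow_mem_of_index_ne_zero hfin.index_ne_zero k'
  have h1 := congrArg Subtype.val (hab _ hgn _ hkm)
  have h2 : g ^ n * k ^ m = k ^ m * g ^ n := h1
  have h3 := commute_of_pow g (k ^ m) tg n hn h2
  exact (commute_of_pow k g tk m hm h3.symm).symm

lemma not_scalar {a b c d h} (hg : NonElliptic (mk2 a b c d h)) :
    b ≠ 0 ∨ c ≠ 0 ∨ a ≠ d := by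
  by_contra hcon
  push Not at hcon
  obtain ⟨rfl, rfl, rfl⟩ := hcon
  have : (a - 1) * (a + 1) = 0 := by linarith
  rcases mul_eq_zero.mp this with h0 | h0
  · have ha : a = 1 := by linarith
    subst ha
    apply hg.2.1
    rw [Matrix.one_fin_two]
    rfl
  · have ha : a = -1 := by linarith
    subst ha
    apply hg.2.2
    ext i j
    fin_cases i <;> fin_cases j <;> simp [mk2]

lemma discr_seq (Γ : Subgroup SL2R) (hΓ : IsDiscreteSubgroup Γ) (u b c : ℝ)
    (hN : b ≠ 0 ∨ c ≠ 0 ∨ u ≠ 0) (hdet : ∀ z : ℝ, (1 + z * u) * (1 - z * u) - z * b * (z * c) = 1)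
    (z : ℕ → ℝ) (hz0 : ∀ m, z m ≠ 0) (hz : Filter.Tendsto z Filter.atTop (nhds 0))
    (hmem : ∀ m, mk2 (1 + z m * u) (z m * b) (z m * c) (1 - z m * u) (hdet (z m)) ∈ Γ) : False := by
  obtain ⟨U, hU, h1, hiso⟩ := hΓ
  let F : ℝ → Matrix (Fin 2) (Fin 2) ℝ := fun y => !![1 + y * u, y * b; y * c, 1 - y * u]
  have hF : Continuous F := by
    apply continuous_matrix
    intro i j
    fin_cases i <;> fin_cases j <;> simp [F] <;> fun_prop
  have hF0 : F 0 = 1 := by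
    rw [Matrix.one_fin_two]
    simp [F]
  have ht : Filter.Tendsto (fun m => F (z m)) Filter.atTop (nhds (1 : Matrix (Fin 2) (Fin 2) ℝ)) := by
    rw [← hF0]
    exact hF.continuousAt.tendsto.comp hz
  obtain ⟨m, hm⟩ := (ht.eventually (hU.mem_nhds h1)).exists
  have := hiso _ (hmem m) hm
  rw [one_mk2, mk2_inj] at this
  obtain ⟨e1, e2, e3, e4⟩ := this
  have hzm := hz0 m
  rcases hN with hN | hN | hN
  · exact mul_ne_zero hzm hN e2
  · exact mul_ne_zero hzm hN e3
  · exact mul_ne_zero hzm hN (by linarith)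

lemma centralizer_form {a b c d h k1 k2 k3 k4 hk} (hN : b ≠ 0 ∨ c ≠ 0 ∨ a ≠ d)
    (hc : mk2 a b c d h * mk2 k1 k2 k3 k4 hk = mk2 k1 k2 k3 k4 hk * mk2 a b c d h) :
    ∃ x y : ℝ, k1 = x + y * a ∧ k2 = y * b ∧ k3 = y * c ∧ k4 = x + y * d := by
  rw [mk2_mul, mk2_mul, mk2_inj] at hc
  obtain ⟨e1, e2, e3, e4⟩ := hc
  have f1 : b * k3 = k2 * c := by linarith
  have f2 : k2 * (a - d) = b * (k1 - k4) := by linarith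
  have f3 : c * (k1 - k4) = k3 * (a - d) := by linarith
  by_cases hb : b = 0
  · by_cases hc : c = 0
    · have had : a - d ≠ 0 := by
        rcases hN with h0 | h0 | h0
        · exact absurd hb h0
        · exact absurd hc h0
        · exact sub_ne_zero.mpr h0
      subst hb hc
      have hk2 : k2 = 0 := by
        have : k2 * (a - d) = 0 := by linarith
        exact (mul_eq_zero.mp this).resolve_right had
      have hk3 : k3 = 0 := by
        have : k3 * (a - d) = 0 := by linarith
        exact (mul_eq_zero.mp this).resolve_right had
      refine ⟨k1 - (k1 - k4) / (a - d) * a, (k1 - k4) / (a - d), by ring, by simp [hk2],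
        by simp [hk3], ?_⟩
      field_simp
      ring
    · refine ⟨k1 - k3 / c * a, k3 / c, by ring, ?_, by field_simp, ?_⟩
      · field_simp
        linarith
      · field_simp
        linarith
  · refine ⟨k1 - k2 / b * a, k2 / b, by ring, by field_simp, ?_, ?_⟩
    · field_simp
      linarith
    · field_simp
      linarith

/-- If `g` commutes with `h g h⁻¹` in a discrete group then it commutes with `h`. -/
lemma comm_of_comm_conj (g h : SL2R) (hg : NonElliptic g) (hh : NonElliptic h)
    (hΓ : IsDiscreteSubgroup (Subgroup.closure {g, h}))
    (hc : g * (h * g * h⁻¹) = (h * g * h⁻¹) * g) : g * h = h * g := by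
  obtain ⟨k, hk⟩ : ∃ k, k = h * g * h⁻¹ := ⟨_, rfl⟩
  rw [← hk] at hc
  have hkh : k * h = h * g := by rw [hk]; group
  have htr : tr2 k = tr2 g := by rw [hk, tr2_conj]
  obtain ⟨a, b, c, d, hdet, rfl⟩ := exists_mk2 g
  obtain ⟨k1, k2, k3, k4, hkdet, rfl⟩ := exists_mk2 k
  obtain ⟨x, y, rfl, rfl, rfl, rfl⟩ := centralizer_form (not_scalar hg) hc
  rw [tr2_mk2, tr2_mk2] at htr
  have hx : x = (a + d) / 2 - y * ((a + d) / 2) := by linarith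
  have hprod : (1 - y) * ((1 + y) * ((a + d) ^ 2 - 4)) = 0 := by
    rw [hx] at hkdet
    linear_combination 4 * hkdet - 4 * y ^ 2 * hdet
  by_cases hy1 : y = 1
  · subst hy1
    have hx0 : x = 0 := by linarith
    subst hx0
    rw [← hkh]
    congr 1
    rw [mk2_inj]
    refine ⟨by ring, by ring, by ring, by ring⟩
  by_cases hy : y = -1
  · subst hy
    have hkinv : mk2 (x + -1 * a) (-1 * b) (-1 * c) (x + -1 * d) hkdet = (mk2 a b c d hdet)⁻¹ := by
      rw [mk2_inv, mk2_inj]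
      refine ⟨by linarith, by ring, by ring, by linarith⟩
    rw [hkinv] at hkh
    generalize mk2 a b c d hdet = g at *
    have h1 : h * g⁻¹ = g * h := by
      have : g * (g⁻¹ * h) * g⁻¹ = g * (h * g) * g⁻¹ := by rw [hkh]
      rw [mul_inv_cancel_left] at this
      rw [this]
      group
    have h2 : h ^ 2 * g = g * h ^ 2 := by
      rw [pow_two, mul_assoc, ← hkh, ← mul_assoc, h1, mul_assoc]
    exact (commute_of_pow h g hh.1 2 (by norm_num) h2).symm
  exfalso
  have ht4 : (a + d) ^ 2 = 4 := by
    rcases mul_eq_zero.mp hprod with h0 | h0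
    · exact absurd (by linarith) hy1
    rcases mul_eq_zero.mp h0 with h0 | h0
    · exact absurd (by linarith) hy
    · linarith
  have hns := not_scalar hg
  have hgmem : mk2 a b c d hdet ∈ Subgroup.closure {mk2 a b c d hdet, h} :=
    Subgroup.subset_closure (by simp)
  have hhmem : h ∈ Subgroup.closure {mk2 a b c d hdet, h} := Subgroup.subset_closure (by simp)
  set Γ := Subgroup.closure {mk2 a b c d hdet, h} with hΓdef
  obtain ⟨p, q, r, s, hhdet, rfl⟩ := exists_mk2 h
  have hkh' := hkh
  rw [mk2_mul, mk2_mul, mk2_inj] at hkh'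
  obtain ⟨e1, e2, e3, e4⟩ := hkh'
  have hy0 : y ≠ 0 := by
    rintro rfl
    have hgk : mk2 p q r s hhdet * mk2 a b c d hdet =
        mk2 p q r s hhdet * mk2 x 0 0 x (by linarith) := by
      rw [← hkh, mk2_mul, mk2_mul, mk2_inj]
      refine ⟨by ring, by ring, by ring, by ring⟩
    have := mul_left_cancel hgk
    rw [mk2_inj] at this
    obtain ⟨rfl, rfl, rfl, rfl⟩ := this
    simp at hns
  obtain ⟨u, hu⟩ : ∃ u, u = (a - d) / 2 := ⟨_, rfl⟩
  have hN : b ≠ 0 ∨ c ≠ 0 ∨ u ≠ 0 := by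
    rcases hns with h0 | h0 | h0
    · exact Or.inl h0
    · exact Or.inr (Or.inl h0)
    · refine Or.inr (Or.inr ?_)
      rw [hu]
      have := sub_ne_zero.mpr h0
      positivity
  have hubc : u ^ 2 + b * c = 0 := by
    rw [hu]
    linear_combination ht4 / 4 - hdet
  have hnd : ∀ z : ℝ, (1 + z * u) * (1 - z * u) - z * b * (z * c) = 1 := by
    intro z
    linear_combination (-z ^ 2) * hubc
  have hconj : ∀ z : ℝ, mk2 (1 + y * z * u) (y * z * b) (y * z * c) (1 - y * z * u) (hnd (y * z)) *
      mk2 p q r s hhdet = mk2 p q r s hhdet *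
      mk2 (1 + z * u) (z * b) (z * c) (1 - z * u) (hnd z) := by
    intro z
    rw [mk2_mul, mk2_mul, mk2_inj, hu]
    refine ⟨?_, ?_, ?_, ?_⟩
    · linear_combination z * e1 - z * p * hx
    · linear_combination z * e2 - z * q * hx
    · linear_combination z * e3 - z * r * hx
    · linear_combination z * e4 - z * s * hx
  have h0mem : mk2 (1 + (a + d) * u) ((a + d) * b) ((a + d) * c) (1 - (a + d) * u)
      (hnd (a + d)) ∈ Γ := by
    have : mk2 (1 + (a + d) * u) ((a + d) * b) ((a + d) * c) (1 - (a + d) * u) (hnd (a + d)) =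
        mk2 a b c d hdet * mk2 a b c d hdet := by
      rw [mk2_mul, mk2_inj, hu]
      refine ⟨?_, by ring, by ring, ?_⟩
      · linear_combination hdet - ht4 / 2
      · linear_combination hdet - ht4 / 2
    rw [this]
    exact Γ.mul_mem hgmem hgmem
  have ht0 : a + d ≠ 0 := by
    intro h0
    rw [h0] at ht4
    norm_num at ht4
  have habs : |y| ≠ 1 := by
    intro h0
    rcases abs_eq (by norm_num : (0 : ℝ) ≤ 1) |>.mp h0 with h0 | h0
    · exact hy1 h0
    · exact hy h0
  rcases lt_or_gt_of_ne habs with hlt | hgt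
  · refine discr_seq Γ hΓ u b c hN hnd (fun m => y ^ m * (a + d))
      (fun m => mul_ne_zero (pow_ne_zero _ hy0) ht0) ?_ ?_
    · have := (tendsto_pow_atTop_nhds_zero_of_abs_lt_one hlt).mul_const (a + d)
      rwa [zero_mul] at this
    · intro m
      induction m with
      | zero => simpa using h0mem
      | succ m ih =>
        have e := hconj (y ^ m * (a + d))
        rw [← eq_mul_inv_iff_mul_eq] at e
        have hm : mk2 (1 + y * (y ^ m * (a + d)) * u) (y * (y ^ m * (a + d)) * b)
            (y * (y ^ m * (a + d)) * c) (1 - y * (y ^ m * (a + d)) * u)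
            (hnd (y * (y ^ m * (a + d)))) ∈ Γ := by
          rw [e]
          exact Γ.mul_mem (Γ.mul_mem hhmem ih) (Γ.inv_mem hhmem)
        convert hm using 2 <;> ring
  · have hlt : |y⁻¹| < 1 := by
      rw [abs_inv]
      exact inv_lt_one_of_one_lt₀ hgt
    refine discr_seq Γ hΓ u b c hN hnd (fun m => y⁻¹ ^ m * (a + d))
      (fun m => mul_ne_zero (pow_ne_zero _ (inv_ne_zero hy0)) ht0) ?_ ?_
    · have := (tendsto_pow_atTop_nhds_zero_of_abs_lt_one hlt).mul_const (a + d)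
      rwa [zero_mul] at this
    · intro m
      induction m with
      | zero => simpa using h0mem
      | succ m ih =>
        have e := hconj (y⁻¹ ^ (m + 1) * (a + d))
        rw [← inv_mul_eq_iff_eq_mul] at e
        have hyy : y * (y⁻¹ ^ (m + 1) * (a + d)) = y⁻¹ ^ m * (a + d) := by
          rw [pow_succ]
          field_simp
        simp only [hyy] at e
        show mk2 _ _ _ _ (hnd (y⁻¹ ^ (m + 1) * (a + d))) ∈ Γ
        rw [← e]
        exact Γ.mul_mem (Γ.inv_mem hhmem) (Γ.mul_mem ih hhmem)

/-! ### The Margulis estimate -/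

lemma exists_scale (β δ s : ℝ) (hs : 0 < s) (h : |β * δ| ≤ s) :
    ∃ ρ : ℝ, 0 < ρ ∧ (β * ρ⁻¹ ^ 2) ^ 2 ≤ s ∧ (δ * ρ ^ 2) ^ 2 ≤ s := by
  have hss : 0 < √s := Real.sqrt_pos.mpr hs
  have hsq : √s ^ 2 = s := Real.sq_sqrt hs.le
  obtain ⟨R, hR, h1, h2⟩ : ∃ R : ℝ, 0 < R ∧ |β| ≤ √s * R ∧ |δ| * R ≤ √s := by
    by_cases hδ : δ = 0
    · subst hδ
      refine ⟨|β| / √s + 1, by positivity, ?_, by simp [hss.le]⟩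
      rw [mul_add, mul_div_cancel₀ _ hss.ne']
      linarith
    · have hd : 0 < |δ| := abs_pos.mpr hδ
      refine ⟨√s / |δ|, by positivity, ?_, ?_⟩
      · rw [abs_mul] at h
        rw [← mul_div_assoc, le_div_iff₀ hd]
        linarith [pow_two √s]
      · rw [mul_div_cancel₀ _ hd.ne']
  refine ⟨√R, Real.sqrt_pos.mpr hR, ?_, ?_⟩
  · rw [inv_pow, Real.sq_sqrt hR.le, ← hsq, sq_le_sq, abs_mul, abs_of_pos hss,
      abs_of_pos (inv_pos.mpr hR), ← div_eq_mul_inv, div_le_iff₀ hR]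
    exact h1
  · rw [Real.sq_sqrt hR.le, ← hsq, sq_le_sq, abs_mul, abs_of_pos hss, abs_of_pos hR]
    exact h2

lemma JJ_lower (ε : ℝ) (hε : 0 < ε) (hmarg : IsMargulisConstant ε) (g h : SL2R)
    (hg : NonElliptic g) (hh : NonElliptic h)
    (htrace : tr2 g ^ 2 - 2 ≤ 2 * Real.cosh (ε / 10))
    (hΓ : IsDiscreteSubgroup (Subgroup.closure {g, h}))
    (hna : ¬ VirtuallyAbelian ↥(Subgroup.closure ({g, h} : Set SL2R)))
    (hs : 0 < 2 * Real.cosh ε - 2 * Real.cosh (ε / 10)) :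
    2 * Real.cosh ε - 2 * Real.cosh (ε / 10) < |JJ g h| := by
  by_contra hcon
  push Not at hcon
  have hnc : g * (h * g * h⁻¹) ≠ (h * g * h⁻¹) * g := fun hc =>
    hna (virtAb_of_comm g h (comm_of_comm_conj g h hg hh hΓ hc))
  have hgk := tr2_g_k g h
  have htrk : tr2 (h * g * h⁻¹) = tr2 g := tr2_conj g h
  have hgmem : g ∈ Subgroup.closure {g, h} := Subgroup.subset_closure (by simp)
  have hhmem : h ∈ Subgroup.closure {g, h} := Subgroup.subset_closure (by simp)
  have hkmem : h * g * h⁻¹ ∈ Subgroup.closure {g, h} :=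
    Subgroup.mul_mem _ (Subgroup.mul_mem _ hhmem hgmem) (Subgroup.inv_mem _ hhmem)
  generalize h * g * h⁻¹ = k at *
  rcases tri_or g k htrk.symm hg.1 with ⟨hc, -⟩ | ⟨P, α, β, δ, h1, h2, hα, eA, eB⟩
  · exact hnc hc
  have hai : α * α⁻¹ = 1 := mul_inv_cancel₀ hα
  have htg : tr2 g = α + α⁻¹ := by
    rw [← tr2_conj g P⁻¹, inv_inv, eA, tr2_mk2]
  have htP : tr2 (g * k) = α ^ 2 + α⁻¹ ^ 2 + β * δ := by
    rw [← tr2_conj (g * k) P⁻¹, inv_inv]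
    have : P⁻¹ * (g * k) * P = (P⁻¹ * g * P) * (P⁻¹ * k * P) := by group
    rw [this, eA, eB, mk2_mul, tr2_mk2]
    ring
  have hβδ : β * δ = - JJ g h := by
    rw [htP, htg] at hgk
    linear_combination hgk + 2 * hai
  obtain ⟨ρ, hρ, hρ1, hρ2⟩ := exists_scale β δ _ hs (by rw [hβδ, abs_neg]; exact hcon)
  have hρi : ρ * ρ⁻¹ = 1 := mul_inv_cancel₀ hρ.ne'
  let D : SL2R := mk2 ρ 0 0 ρ⁻¹ (by linarith)
  have eA' : (P * D)⁻¹ * g * (P * D) = mk2 α (β * ρ⁻¹ ^ 2) 0 α⁻¹ (by linarith) := by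
    have : (P * D)⁻¹ * g * (P * D) = D⁻¹ * (P⁻¹ * g * P) * D := by group
    rw [this, eA, mk2_inv, mk2_mul, mk2_mul, mk2_inj]
    refine ⟨by linear_combination α * hρi, by ring, by ring,
      by linear_combination α⁻¹ * hρi⟩
  have eB' : (P * D)⁻¹ * k * (P * D) = mk2 α 0 (δ * ρ ^ 2) α⁻¹ (by linarith) := by
    have : (P * D)⁻¹ * k * (P * D) = D⁻¹ * (P⁻¹ * k * P) * D := by group
    rw [this, eB, mk2_inv, mk2_mul, mk2_mul, mk2_inj]
    refine ⟨by linear_combination α * hρi, by ring, by ring,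
      by linear_combination α⁻¹ * hρi⟩
  have hα2 : α ^ 2 + α⁻¹ ^ 2 ≤ 2 * Real.cosh (ε / 10) := by
    rw [htg] at htrace
    nlinarith
  have dle : ∀ r : ℝ, 0 ≤ r → Real.cosh r ≤ Real.cosh ε → r ≤ ε := by
    intro r hr hc
    rwa [Real.cosh_le_cosh, abs_of_nonneg hr, abs_of_pos hε] at hc
  set x : ℍ := (P * D) • UpperHalfPlane.I with hx
  have d1 : dist x (g • x) ≤ ε := by
    apply dle _ dist_nonneg
    rw [hx, dist_conj, eA', cosh_dist_I]
    linarith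
  have d2 : dist x (k • x) ≤ ε := by
    apply dle _ dist_nonneg
    rw [hx, dist_conj, eB', cosh_dist_I]
    linarith
  exact hnc (comm_of_virtAb _ (hmarg _ hΓ x) g k ⟨hgmem, d1⟩ ⟨hkmem, d2⟩ hg.1
    (by rw [htrk]; exact hg.1))

/-- Theorem 5.3 (thm:Case2) of the paper for `X = ℍ²`: there is a uniform bound `K` such
that for non-elliptic `g, h` generating a discrete nonelementary subgroup with
`τ(g) ≤ ε/10`, the images of `g` and `hⁱ g h⁻ⁱ` in `PSL(2,ℝ)` generate a free group of
rank two for some `1 ≤ i ≤ K`. -/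
theorem case2_free_conjugate (ε : ℝ) (hε : 0 < ε) (hmarg : IsMargulisConstant ε) :
    ∃ K : ℕ, 0 < K ∧ ∀ g h : SL2R,
      NonElliptic g → NonElliptic h →
      translationLength g ≤ ε / 10 →
      IsDiscreteSubgroup (Subgroup.closure {g, h}) →
      ¬ VirtuallyAbelian ↥(Subgroup.closure ({g, h} : Set SL2R)) →
      ∃ i : ℕ, 1 ≤ i ∧ i ≤ K ∧
        Function.Injective
          ⇑(FreeGroup.lift
              ![QuotientGroup.mk' (Subgroup.center SL2R) g,
                QuotientGroup.mk' (Subgroup.center SL2R) (h ^ i * g * (h ^ i)⁻¹)] :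
            FreeGroup (Fin 2) →* SL2R ⧸ Subgroup.center SL2R) := by
  set s := 2 * Real.cosh ε - 2 * Real.cosh (ε / 10) with hsdef
  set T := 2 + 2 * Real.cosh (ε / 10) with hTdef
  have hs : 0 < s := by
    have : Real.cosh (ε / 10) < Real.cosh ε := by
      rw [Real.cosh_lt_cosh, abs_of_pos hε, abs_of_pos (by linarith)]
      linarith
    rw [hsdef]
    linarith
  have hT4 : 4 ≤ T := by
    have := Real.one_le_cosh (ε / 10)
    rw [hTdef]
    linarith
  refine ⟨⌈T / s⌉₊ + 1, by omega, ?_⟩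
  intro g h hg hh hτ hΓ hna
  have htrace := trace_le_of_translationLength g (ε / 10) (by linarith) hτ
  have hJ := JJ_lower ε hε hmarg g h hg hh htrace hΓ hna hs
  set K : ℕ := ⌈T / s⌉₊ + 1 with hK
  refine ⟨K, by omega, le_rfl, ?_⟩
  have hK1 : (1 : ℝ) ≤ K := by
    rw [hK]
    push_cast
    linarith [Nat.cast_nonneg (α := ℝ) ⌈T / s⌉₊]
  have hKs : T ≤ K * s := by
    have h1 := Nat.le_ceil (T / s)
    rw [div_le_iff₀ hs] at h1
    rw [hK]
    push_cast
    linarith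
  have hU : (K : ℝ) ≤ |UU (tr2 h) K| := UU_ge _ hh.1 K
  have hJK : T ≤ |JJ g (h ^ K)| := by
    rw [JJ_pow, abs_mul, abs_pow]
    calc T ≤ K * s := hKs
      _ ≤ (K : ℝ) ^ 2 * s := by
        gcongr
        nlinarith
      _ ≤ |UU (tr2 h) K| ^ 2 * |JJ g h| := by gcongr
  apply inj_PSL
  have e1 := tr2_g_k g (h ^ K)
  have e2 := tr2_g_kinv g (h ^ K)
  have hk := tr2_conj g (h ^ K)
  rcases le_total 0 (JJ g (h ^ K)) with h0 | h0
  · rw [abs_of_nonneg h0] at hJK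
    apply free_of_trace _ _ hk.symm hg.1
    rw [e1]
    linarith
  · rw [abs_of_nonpos h0] at hJK
    apply inj_inv
    apply free_of_trace _ _ (by rw [tr2_inv, hk]) hg.1
    rw [e2]
    linarith
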